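/- Let X be an n-element variable set and let Σ = {τ_1, …, τ_s} be a simple set of abstract statistics over X, meaning every τ_i = ((V_i|U_i), p_i) has |U_i| ≤ 1. Then for every b ∈ ℝ^s: Log-U-Bound_{N_n}(Σ, b) = Log-U-Bound_{Γ̄*_n}(Σ, b) = Log-U-Bound_{Γ_n}(Σ, b). -/

import Mathlib

open scoped BigOperators ENNReal

namespace JoinBounds

noncomputable section

variable {A α : Type*}

/-- The projection of a tuple `t : A → α` onto the attribute set `U`, represented as a
partial tuple. -/
def proj [DecidableEq A] (U : Finset A) (t : A → α) : A → Option α :=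
  fun x => if x ∈ U then some (t x) else none

/-- The projection of a relation `R` onto the attribute set `U`. -/
def projR [Fintype A] [DecidableEq A] [DecidableEq α] (U : Finset A) (R : Finset (A → α)) :
    Finset (A → Option α) :=
  R.image (proj U)

/-- The degree of a `U`-tuple `u` in `R`: the number of distinct `V`-tuples
appearing in `R` together with `u`. -/
def deg [Fintype A] [DecidableEq A] [DecidableEq α] (U V : Finset A) (R : Finset (A → α))
    (u : A → Option α) : ℕ :=
  (projR V (R.filter fun t => proj U t = u)).card

/-- The `ℓ_p`-norm of the degree sequence `deg_R(V|U)`, for `p ∈ (0, ∞]`. -/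
def lpNorm [Fintype A] [DecidableEq A] [DecidableEq α] (U V : Finset A) (R : Finset (A → α))
    (p : ℝ≥0∞) : ℝ :=
  if p = ⊤ then (((projR U R).sup fun u => deg U V R u : ℕ) : ℝ)
  else (∑ u ∈ projR U R, (deg U V R u : ℝ) ^ p.toReal) ^ (1 / p.toReal)

/-- The marginal probability, on the attribute set `W`, of the partial tuple `w`, under a
probability distribution `P` on the tuples of `R`. -/
def marg [Fintype A] [DecidableEq A] [DecidableEq α] (P : (A → α) → ℝ) (R : Finset (A → α))
    (W : Finset A) (w : A → Option α) : ℝ :=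
  ∑ t ∈ R.filter fun t => proj W t = w, P t

/-- The (base-2 Shannon) entropy of the marginal on the attribute set `W` of the
distribution `P` on the tuples of `R`: this is the entropic vector `h(W)`. -/
def entropy [Fintype A] [DecidableEq A] [DecidableEq α] (P : (A → α) → ℝ) (R : Finset (A → α))
    (W : Finset A) : ℝ :=
  -∑ w ∈ projR W R, marg P R W w * Real.logb 2 (marg P R W w)

noncomputable section

variable {A : Type*}

/-- `h(τ)` for the abstract statistics `τ = ((V|U), p)`:
`(1/p)·h(U) + h(V|U)` where `h(V|U) = h(U ∪ V) - h(U)` and `1/∞ = 0`. -/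
def statVal [DecidableEq A] (h : Finset A → ℝ) (U V : Finset A) (p : ℝ≥0∞) : ℝ :=
  (1 / p).toReal * h U + (h (U ∪ V) - h U)

/-- A polymatroid on the variable set `A`. -/
def IsPolymatroid [DecidableEq A] (h : Finset A → ℝ) : Prop :=
  h ∅ = 0 ∧ (∀ U V : Finset A, U ⊆ V → h U ≤ h V) ∧
    ∀ U V : Finset A, h U + h V ≥ h (U ∪ V) + h (U ∩ V)

/-- The set `Γ_n` of polymatroids. -/
def Gamma (A : Type*) [DecidableEq A] : Set (Finset A → ℝ) := {h | IsPolymatroid h}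

/-- The step function `h^W`. -/
def stepFn [DecidableEq A] (W : Finset A) : Finset A → ℝ :=
  fun U => if (U ∩ W).Nonempty then 1 else 0

/-- The set `N_n` of normal polymatroids: nonnegative linear combinations of step functions. -/
def Normal (A : Type*) [Fintype A] [DecidableEq A] : Set (Finset A → ℝ) :=
  {h | ∃ α : Finset A → ℝ, (∀ W, 0 ≤ α W) ∧ h = ∑ W : Finset A, α W • stepFn W}

/-- `Log-U-Bound_K(Σ, b)`: the infimum of `∑ i, w i * b i` over all nonnegative `w` such that the
`Σ`-inequality `∑ i, w i * h(τ i) ≥ h(X)` is valid for all `h ∈ K` (an `EReal`; `⊤` if no valid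
inequality exists). -/
def LogUBound [Fintype A] [DecidableEq A] (K : Set (Finset A → ℝ)) (s : ℕ)
    (U V : Fin s → Finset A) (p : Fin s → ℝ≥0∞) (b : Fin s → ℝ) : EReal :=
  sInf {r : EReal | ∃ w : Fin s → ℝ, (∀ i, 0 ≤ w i) ∧
    (∀ h ∈ K, ∑ i, w i * statVal h (U i) (V i) (p i) ≥ h Finset.univ) ∧
    r = ((∑ i, w i * b i : ℝ) : EReal)}

/-- `Log-L-Bound_K(Σ, b)`: the supremum of `h(X)` over all `h ∈ K` satisfying the
log-statistics `h(τ i) ≤ b i` (an `EReal`). -/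
def LogLBound [Fintype A] [DecidableEq A] (K : Set (Finset A → ℝ)) (s : ℕ)
    (U V : Fin s → Finset A) (p : Fin s → ℝ≥0∞) (b : Fin s → ℝ) : EReal :=
  sSup {r : EReal | ∃ h ∈ K, (∀ i, statVal h (U i) (V i) (p i) ≤ b i) ∧
    r = ((h Finset.univ : ℝ) : EReal)}

end

section
variable {A : Type*}

/-- The set `Γ*_n` of entropic vectors: vectors of the form `W ↦ H(X_W)` for jointly
distributed random variables `(X_i)_{i ∈ A}` with finite range. -/
def EntropicSet (A : Type*) [Fintype A] [DecidableEq A] : Set (Finset A → ℝ) :=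
  {h | ∃ (β : Type) (_ : Fintype β) (_ : DecidableEq β) (P : (A → β) → ℝ),
    (∀ t, 0 ≤ P t) ∧ (∑ t, P t = 1) ∧ ∀ W : Finset A, h W = entropy P Finset.univ W}

end

end


section Aux
variable {A : Type*}

lemma normal_zero [Fintype A] [DecidableEq A] : (0 : Finset A → ℝ) ∈ Normal A :=
  ⟨fun _ => 0, fun _ => le_rfl, by simp⟩

lemma normal_add [Fintype A] [DecidableEq A] {f g : Finset A → ℝ}
    (hf : f ∈ Normal A) (hg : g ∈ Normal A) : f + g ∈ Normal A := by
  obtain ⟨a, ha, rfl⟩ := hf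
  obtain ⟨c, hc, rfl⟩ := hg
  refine ⟨fun W => a W + c W, fun W => add_nonneg (ha W) (hc W), ?_⟩
  simp only [add_smul, Finset.sum_add_distrib]

lemma normal_step [Fintype A] [DecidableEq A] (T : Finset A) (e : ℝ) (he : 0 ≤ e) :
    e • stepFn T ∈ Normal A := by
  refine ⟨fun W => if W = T then e else 0, fun W => by dsimp only; split_ifs <;> simp [he], ?_⟩
  simp [ite_smul]

lemma stepFn_nonneg [DecidableEq A] (T W : Finset A) : 0 ≤ stepFn T W := by
  unfold stepFn; split_ifs <;> simp

lemma stepFn_mono [DecidableEq A] (T W W' : Finset A) (h : W ⊆ W') :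
    stepFn T W ≤ stepFn T W' := by
  unfold stepFn
  split_ifs with h1 h2
  · simp
  · exact absurd (h1.mono (Finset.inter_subset_inter_right h)) h2
  · simp
  · simp

lemma normal_nonneg [Fintype A] [DecidableEq A] {f : Finset A → ℝ}
    (hf : f ∈ Normal A) (W : Finset A) : 0 ≤ f W := by
  obtain ⟨a, ha, rfl⟩ := hf
  rw [Finset.sum_apply]
  exact Finset.sum_nonneg fun T _ => mul_nonneg (ha T) (stepFn_nonneg T W)

lemma normal_mono [Fintype A] [DecidableEq A] {f : Finset A → ℝ}
    (hf : f ∈ Normal A) (W W' : Finset A) (h : W ⊆ W') : f W ≤ f W' := by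
  obtain ⟨a, ha, rfl⟩ := hf
  rw [Finset.sum_apply, Finset.sum_apply]
  exact Finset.sum_le_sum fun T _ => mul_le_mul_of_nonneg_left (stepFn_mono T W W' h) (ha T)

/-- The max function is normal. -/
lemma exists_max [Fintype A] [DecidableEq A] (n : ℕ) : ∀ (a : A → ℝ), (∀ i, 0 ≤ a i) →
    (Finset.univ.filter fun i => 0 < a i).card ≤ n →
    ∃ m ∈ Normal A, (∀ W : Finset A, ∀ c : ℝ, 0 ≤ c → (∀ i ∈ W, a i ≤ c) → m W ≤ c) ∧
      ∀ W : Finset A, ∀ i ∈ W, a i ≤ m W := by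
  induction n with
  | zero =>
    intro a ha hc
    refine ⟨0, normal_zero, fun W c hc _ => hc, fun W i _ => ?_⟩
    have h0 : (Finset.univ.filter fun i => 0 < a i) = ∅ := by
      simpa using hc
    have : i ∉ (Finset.univ.filter fun i => 0 < a i) := by rw [h0]; simp
    simpa using this
  | succ n ih =>
    intro a ha hc
    set T := Finset.univ.filter fun i => 0 < a i with hT
    have memT : ∀ i, i ∈ T ↔ 0 < a i := fun i => by simp [hT]
    rcases T.eq_empty_or_nonempty with h0 | hne
    · exact ih a ha (by rw [← hT, h0]; simp)
    obtain ⟨j, hj, hmin⟩ := Finset.exists_min_image T a hne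
    have hjp := (memT j).1 hj
    obtain ⟨m, hm, h1, h2⟩ := ih (fun i => if i ∈ T then a i - a j else 0)
      (fun i => by
        split_ifs with h
        · linarith [hmin i h]
        · exact le_rfl)
      (by
        have : (Finset.univ.filter fun i => 0 < (if i ∈ T then a i - a j else 0)) ⊆ T.erase j := by
          intro i hi
          simp only [Finset.mem_filter, Finset.mem_univ, true_and] at hi
          rw [Finset.mem_erase]
          split_ifs at hi with h
          · refine ⟨?_, h⟩
            rintro rfl
            simp at hi
          · simp at hi
        have := Finset.card_le_card this
        rw [Finset.card_erase_of_mem hj] at this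
        omega)
    refine ⟨m + a j • stepFn T, normal_add hm (normal_step T _ hjp.le), ?_, ?_⟩
    · intro W c hc hW
      by_cases hWT : (W ∩ T).Nonempty
      · obtain ⟨i, hi⟩ := hWT
        have hi' := Finset.mem_inter.1 hi
        have hce : a j ≤ c := (hmin i hi'.2).trans (hW i hi'.1)
        have := h1 W (c - a j) (by linarith) (fun k hk => by
          split_ifs with h
          · linarith [hW k hk]
          · linarith)
        have hs : stepFn T W = 1 := if_pos ⟨i, hi⟩
        simp only [Pi.add_apply, Pi.smul_apply, smul_eq_mul, hs]
        linarith
      · have hs : stepFn T W = 0 := if_neg hWT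
        simp only [Pi.add_apply, Pi.smul_apply, smul_eq_mul, hs, mul_zero, add_zero]
        refine h1 W c hc fun k hk => ?_
        split_ifs with h
        · exact absurd ⟨k, Finset.mem_inter.2 ⟨hk, h⟩⟩ hWT
        · exact hc
    · intro W i hi
      simp only [Pi.add_apply, Pi.smul_apply, smul_eq_mul]
      have := h2 W i hi
      by_cases h : i ∈ T
      · have hs : stepFn T W = 1 := if_pos ⟨i, Finset.mem_inter.2 ⟨hi, h⟩⟩
        rw [if_pos h] at this
        rw [hs]; linarith
      · have : a i ≤ 0 := not_lt.1 fun h' => h ((memT i).2 h')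
        have := normal_nonneg hm W
        have := mul_nonneg hjp.le (stepFn_nonneg T W)
        linarith

/-- Every polymatroid dominates a normal one agreeing on singletons and the top. -/
lemma exists_normal [Fintype A] [DecidableEq A] (S : Finset A) :
    ∀ h : Finset A → ℝ, IsPolymatroid h → ∃ g ∈ Normal A, (∀ W, g W ≤ h W) ∧ h S ≤ g S ∧
      ∀ i ∈ S, h {i} ≤ g {i} := by
  induction S using Finset.induction_on with
  | empty =>
    intro h hh
    refine ⟨0, normal_zero, fun W => ?_, by simp [hh.1], by simp⟩
    have := hh.2.1 ∅ W (Finset.empty_subset _)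
    rw [hh.1] at this
    exact this
  | insert n S hn ih =>
    intro h hh
    obtain ⟨h0, hmono, hsub⟩ := hh
    obtain ⟨k', hk', hle, hS, hsing⟩ := ih (fun W => h (insert n W) - h {n}) (by
      refine ⟨by simp, fun U V hUV => ?_, fun U V => ?_⟩
      · have := hmono _ _ (Finset.insert_subset_insert n hUV)
        simp only; linarith
      · have := hsub (insert n U) (insert n V)
        have e1 : insert n U ∪ insert n V = insert n (U ∪ V) := by grind
        have e2 : insert n U ∩ insert n V = insert n (U ∩ V) := by grind
        rw [e1, e2] at this
        simp only; linarith)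
    -- mutual information is monotone
    have hI : ∀ W : Finset A, ∀ i ∈ W,
        h {i} + h {n} - h (insert n {i}) ≤ h W + h {n} - h (insert n W) := by
      intro W i hi
      have := hsub W (insert n {i})
      have e1 : W ∪ insert n {i} = insert n W := by grind
      have e2 : h {i} ≤ h (W ∩ insert n {i}) := hmono _ _ (by grind)
      rw [e1] at this
      linarith
    have hInn : ∀ W : Finset A, 0 ≤ h W + h {n} - h (insert n W) := by
      intro W
      have := hsub {n} W
      have e2 := hmono ∅ ({n} ∩ W) (Finset.empty_subset _)
      rw [h0] at e2
      rw [← Finset.insert_eq] at this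
      linarith
    obtain ⟨m, hm, hm1, hm2⟩ := exists_max _ (fun i => h {i} + h {n} - h (insert n {i}))
      (fun i => hInn {i}) le_rfl
    refine ⟨k' + m, normal_add hk' hm, fun W => ?_, ?_, fun i hi => ?_⟩
    · have e1 := hle W
      have e2 := hm1 W _ (hInn W) (hI W)
      simp only [Pi.add_apply] at *
      linarith
    · have e1 := normal_mono hk' S (insert n S) (Finset.subset_insert _ _)
      have e2 := hm2 (insert n S) n (Finset.mem_insert_self _ _)
      simp only [Pi.add_apply, Finset.pair_eq_singleton] at *
      linarith
    · rw [Finset.mem_insert] at hi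
      have e2 := hm2 {i} i (Finset.mem_singleton_self _)
      simp only [Pi.add_apply]
      rcases hi with rfl | hi
      · have := normal_nonneg hk' {i}
        simp only [Finset.pair_eq_singleton] at *
        linarith
      · have := hsing i hi
        linarith

lemma gamma_valid [Fintype A] [DecidableEq A] (s : ℕ) (U V : Fin s → Finset A)
    (p : Fin s → ℝ≥0∞) (hsimple : ∀ i, (U i).card ≤ 1) (w : Fin s → ℝ) (hw : ∀ i, 0 ≤ w i)
    (hN : ∀ h ∈ Normal A, ∑ i, w i * statVal h (U i) (V i) (p i) ≥ h Finset.univ) :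
    ∀ h ∈ Gamma A, ∑ i, w i * statVal h (U i) (V i) (p i) ≥ h Finset.univ := by
  intro h hh
  obtain ⟨g, hg, hle, htop, hsing⟩ := exists_normal Finset.univ h hh
  have h1 := hN g hg
  have h2 : ∑ i, w i * statVal g (U i) (V i) (p i) ≤ ∑ i, w i * statVal h (U i) (V i) (p i) := by
    refine Finset.sum_le_sum fun i _ => mul_le_mul_of_nonneg_left ?_ (hw i)
    have hU : g (U i) = h (U i) := by
      rcases (U i).eq_empty_or_nonempty with h0 | h0
      · rw [h0]
        have := normal_nonneg hg ∅
        have := hle ∅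
        have := hh.1
        linarith
      · obtain ⟨x, hx⟩ := Finset.card_eq_one.1
          (le_antisymm (hsimple i) (Finset.card_pos.2 h0))
        rw [hx]
        exact le_antisymm (hle _) (hsing x (Finset.mem_univ _))
    unfold statVal
    rw [hU]
    linarith [hle (U i ∪ V i)]
  linarith

/-! Entropy. -/

open Classical in
/-- Probability of agreeing with `t` on `W`. -/
noncomputable def qq {β : Type} [Fintype A] [Fintype β] [DecidableEq A]
    (P : (A → β) → ℝ) (W : Finset A) (t : A → β) : ℝ :=
  ∑ t', if (∀ x ∈ W, t' x = t x) then P t' else 0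

lemma proj_eq_iff {β : Type} [DecidableEq A] (W : Finset A) (t t' : A → β) :
    proj W t' = proj W t ↔ ∀ x ∈ W, t' x = t x := by
  unfold proj
  rw [funext_iff]
  refine forall_congr' fun x => ?_
  by_cases hx : x ∈ W <;> simp [hx]

lemma marg_proj {β : Type} [Fintype A] [DecidableEq A] [Fintype β] [DecidableEq β]
    (P : (A → β) → ℝ) (W : Finset A) (t : A → β) :
    marg P Finset.univ W (proj W t) = qq P W t := by
  unfold marg qq
  rw [Finset.sum_filter]
  refine Finset.sum_congr rfl fun t' _ => ?_
  simp only [proj_eq_iff]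
  congr

lemma entropy_eq {β : Type} [Fintype A] [DecidableEq A] [Fintype β] [DecidableEq β]
    (P : (A → β) → ℝ) (W : Finset A) :
    entropy P Finset.univ W = -∑ t, P t * Real.logb 2 (qq P W t) := by
  unfold entropy
  congr 1
  have h := Finset.sum_fiberwise_of_maps_to (s := (Finset.univ : Finset (A → β)))
    (t := projR W Finset.univ) (g := proj W)
    (fun t ht => Finset.mem_image_of_mem _ ht) (fun t => P t * Real.logb 2 (qq P W t))
  rw [← h]
  refine Finset.sum_congr rfl fun w _ => ?_
  conv_lhs => enter [1]; unfold marg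
  rw [Finset.sum_mul]
  refine Finset.sum_congr rfl fun t ht => ?_
  rw [← marg_proj, (Finset.mem_filter.1 ht).2]

section
variable {β : Type} [Fintype A] [DecidableEq A] [Fintype β]
  (P : (A → β) → ℝ)

lemma qq_nonneg (hP : ∀ t, 0 ≤ P t) (W : Finset A) (t : A → β) : 0 ≤ qq P W t := by
  classical
  unfold qq
  exact Finset.sum_nonneg fun t' _ => by split_ifs <;> simp [hP]

lemma le_qq (hP : ∀ t, 0 ≤ P t) (W : Finset A) (t : A → β) : P t ≤ qq P W t := by
  classical
  unfold qq
  have := Finset.single_le_sum (f := fun t' => if (∀ x ∈ W, t' x = t x) then P t' else 0)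
    (fun t' _ => by split_ifs <;> simp [hP]) (Finset.mem_univ t)
  simpa using this

lemma qq_anti (hP : ∀ t, 0 ≤ P t) (U V : Finset A) (h : U ⊆ V) (t : A → β) : qq P V t ≤ qq P U t := by
  classical
  unfold qq
  refine Finset.sum_le_sum fun t' _ => ?_
  split_ifs with h1 h2
  · exact le_rfl
  · exact absurd (fun x hx => h1 x (h hx)) h2
  · exact hP _
  · exact le_rfl

lemma qq_congr (W : Finset A) (t t' : A → β) (h : ∀ x ∈ W, t x = t' x) :
    qq P W t = qq P W t' := by
  classical
  unfold qq
  refine Finset.sum_congr rfl fun r _ => ?_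
  have : (∀ x ∈ W, r x = t x) ↔ (∀ x ∈ W, r x = t' x) :=
    forall₂_congr fun x hx => by rw [h x hx]
  simp only [this]

open Classical in
/-- Sum of conditional probabilities within a class is at most one. -/
lemma class_sum (W : Finset A) (r : A → β) :
    ∑ s, (if (∀ x ∈ W, s x = r x) then P s / qq P W s else 0) ≤ 1 := by
  have : ∑ s, (if (∀ x ∈ W, s x = r x) then P s / qq P W s else 0)
      = qq P W r / qq P W r := by
    conv_rhs => enter [1]; unfold qq
    rw [Finset.sum_div]
    refine Finset.sum_congr rfl fun s _ => ?_
    split_ifs with h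
    · rw [qq_congr P W s r h]
    · simp
  rw [this]
  exact div_self_le_one _

open Classical in
lemma key_inner (hP : ∀ t, 0 ≤ P t) (U V : Finset A) (t t' : A → β) :
    ∑ s, (if (∀ x ∈ U, t x = s x) ∧ (∀ x ∈ V, t' x = s x) then
        P s / (qq P (U ∪ V) s * qq P (U ∩ V) s) else 0)
      ≤ if (∀ x ∈ U ∩ V, t' x = t x) then 1 / qq P (U ∩ V) t else 0 := by
  by_cases hex : ∃ s0 : A → β, (∀ x ∈ U, t x = s0 x) ∧ (∀ x ∈ V, t' x = s0 x)
  · obtain ⟨s0, h1, h2⟩ := hex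
    rw [if_pos (fun x hx => by
      rw [h1 x (Finset.mem_inter.1 hx).1, h2 x (Finset.mem_inter.1 hx).2])]
    have hc := class_sum P (U ∪ V) s0
    have hq := qq_nonneg P hP (U ∩ V) t
    have : ∑ s, (if (∀ x ∈ U, t x = s x) ∧ (∀ x ∈ V, t' x = s x) then
        P s / (qq P (U ∪ V) s * qq P (U ∩ V) s) else 0)
        = (∑ s, (if (∀ x ∈ U ∪ V, s x = s0 x) then P s / qq P (U ∪ V) s else 0))
          * (1 / qq P (U ∩ V) t) := by
      rw [Finset.sum_mul]
      refine Finset.sum_congr rfl fun s _ => ?_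
      have hiff : ((∀ x ∈ U, t x = s x) ∧ (∀ x ∈ V, t' x = s x)) ↔
          ∀ x ∈ U ∪ V, s x = s0 x := by
        constructor
        · rintro ⟨a, c⟩ x hx
          rcases Finset.mem_union.1 hx with hx | hx
          · rw [← a x hx, h1 x hx]
          · rw [← c x hx, h2 x hx]
        · intro a
          exact ⟨fun x hx => by rw [a x (Finset.mem_union_left _ hx), h1 x hx],
            fun x hx => by rw [a x (Finset.mem_union_right _ hx), h2 x hx]⟩
      by_cases hs : ∀ x ∈ U ∪ V, s x = s0 x
      · rw [if_pos hs, if_pos (hiff.2 hs)]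
        rw [qq_congr P (U ∩ V) s t
          (fun x hx => ((hiff.2 hs).1 x (Finset.mem_inter.1 hx).1).symm)]
        rw [div_mul_div_comm, mul_one]
      · rw [if_neg hs, if_neg (fun h => hs (hiff.1 h))]
        simp
    rw [this]
    exact mul_le_of_le_one_left (by positivity) hc
  · rw [Finset.sum_eq_zero]
    · have hq := qq_nonneg P hP (U ∩ V) t
      split_ifs
      · positivity
      · exact le_rfl
    · intro s _
      exact if_neg fun h => hex ⟨s, h⟩

lemma key_sum (hP : ∀ t, 0 ≤ P t) (h1 : ∑ t, P t = 1) (U V : Finset A) :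
    ∑ s, P s * (qq P U s * qq P V s / (qq P (U ∪ V) s * qq P (U ∩ V) s)) ≤ 1 := by
  classical
  calc ∑ s, P s * (qq P U s * qq P V s / (qq P (U ∪ V) s * qq P (U ∩ V) s))
      = ∑ s, ∑ t, ∑ t', P t * P t' *
          (if (∀ x ∈ U, t x = s x) ∧ (∀ x ∈ V, t' x = s x) then
            P s / (qq P (U ∪ V) s * qq P (U ∩ V) s) else 0) := by
        refine Finset.sum_congr rfl fun s _ => ?_
        have : qq P U s * qq P V s = ∑ t, ∑ t',
            (if (∀ x ∈ U, t x = s x) then P t else 0) *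
            (if (∀ x ∈ V, t' x = s x) then P t' else 0) := by
          unfold qq
          rw [Finset.sum_mul_sum]
        rw [this, Finset.sum_div, Finset.mul_sum]
        refine Finset.sum_congr rfl fun t _ => ?_
        rw [Finset.sum_div, Finset.mul_sum]
        refine Finset.sum_congr rfl fun t' _ => ?_
        by_cases ha : ∀ x ∈ U, t x = s x <;> by_cases hb : ∀ x ∈ V, t' x = s x
        · rw [if_pos ha, if_pos hb, if_pos ⟨ha, hb⟩]; ring
        · rw [if_neg (c := ∀ x ∈ V, t' x = s x) hb, if_neg (fun h : _ ∧ _ => hb h.2)]; simp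
        · rw [if_neg (c := ∀ x ∈ U, t x = s x) ha, if_neg (fun h : _ ∧ _ => ha h.1)]; simp
        · rw [if_neg (c := ∀ x ∈ U, t x = s x) ha, if_neg (fun h : _ ∧ _ => ha h.1)]; simp
    _ = ∑ t, ∑ t', P t * P t' * ∑ s,
          (if (∀ x ∈ U, t x = s x) ∧ (∀ x ∈ V, t' x = s x) then
            P s / (qq P (U ∪ V) s * qq P (U ∩ V) s) else 0) := by
        rw [Finset.sum_comm]
        refine Finset.sum_congr rfl fun t _ => ?_
        rw [Finset.sum_comm]
        refine Finset.sum_congr rfl fun t' _ => ?_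
        rw [Finset.mul_sum]
    _ ≤ ∑ t, ∑ t', P t * P t' *
          (if (∀ x ∈ U ∩ V, t' x = t x) then 1 / qq P (U ∩ V) t else 0) :=
        Finset.sum_le_sum fun t _ => Finset.sum_le_sum fun t' _ =>
          mul_le_mul_of_nonneg_left (key_inner P hP U V t t') (mul_nonneg (hP t) (hP t'))
    _ = ∑ t, P t * (qq P (U ∩ V) t / qq P (U ∩ V) t) := by
        refine Finset.sum_congr rfl fun t _ => ?_
        conv_rhs => enter [2, 1]; unfold qq
        rw [Finset.sum_div, Finset.mul_sum]
        refine Finset.sum_congr rfl fun t' _ => ?_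
        split_ifs
        · ring
        · simp
    _ ≤ ∑ t, P t := Finset.sum_le_sum fun t _ =>
          mul_le_of_le_one_right (hP t) (div_self_le_one _)
    _ = 1 := h1

end

lemma entropic_sub_gamma [Fintype A] [DecidableEq A] : EntropicSet A ⊆ Gamma A := by
  rintro h ⟨β, _, _, P, hP, h1, hh⟩
  have hpos : ∀ W t, 0 < P t → 0 < qq P W t := fun W t ht => ht.trans_le (le_qq P hP W t)
  refine ⟨?_, fun U V hUV => ?_, fun U V => ?_⟩
  · rw [hh, entropy_eq]
    have : ∀ t, qq P ∅ t = 1 := fun t => by unfold qq; simpa using h1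
    simp [this]
  · rw [hh, hh, entropy_eq, entropy_eq, neg_le_neg_iff]
    refine Finset.sum_le_sum fun t _ => ?_
    rcases (hP t).eq_or_lt with h0 | h0
    · rw [← h0]; simp
    · exact mul_le_mul_of_nonneg_left
        (Real.logb_le_logb_of_le (by norm_num) (hpos V t h0) (qq_anti P hP U V hUV t)) h0.le
  · simp only [hh, entropy_eq]
    have key := key_sum P hP h1 U V
    have hl2 : 0 < Real.log 2 := Real.log_pos (by norm_num)
    have pt : ∀ t, P t * Real.logb 2 (qq P U t) + P t * Real.logb 2 (qq P V t)
        - P t * Real.logb 2 (qq P (U ∪ V) t) - P t * Real.logb 2 (qq P (U ∩ V) t)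
        ≤ (P t * (qq P U t * qq P V t / (qq P (U ∪ V) t * qq P (U ∩ V) t)) - P t)
          / Real.log 2 := by
      intro t
      rcases (hP t).eq_or_lt with h0 | h0
      · rw [← h0]; simp
      have a1 := hpos U t h0
      have a2 := hpos V t h0
      have a3 := hpos (U ∪ V) t h0
      have a4 := hpos (U ∩ V) t h0
      have := Real.log_le_sub_one_of_pos (div_pos (mul_pos a1 a2) (mul_pos a3 a4))
      rw [Real.log_div (mul_pos a1 a2).ne' (mul_pos a3 a4).ne',
        Real.log_mul a1.ne' a2.ne', Real.log_mul a3.ne' a4.ne'] at this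
      rw [le_div_iff₀ hl2]
      have e : ∀ x, Real.logb 2 x * Real.log 2 = Real.log x := fun x => by
        unfold Real.logb; field_simp
      have := mul_le_mul_of_nonneg_left this h0.le
      calc _ = P t * (Real.logb 2 (qq P U t) * Real.log 2 + Real.logb 2 (qq P V t) * Real.log 2
            - (Real.logb 2 (qq P (U ∪ V) t) * Real.log 2
              + Real.logb 2 (qq P (U ∩ V) t) * Real.log 2)) := by ring
        _ ≤ _ := by
          simp only [e]
          linarith
    have hs := Finset.sum_le_sum fun t (_ : t ∈ Finset.univ) => pt t
    rw [← Finset.sum_div] at hs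
    simp only [Finset.sum_sub_distrib, Finset.sum_add_distrib, h1] at hs
    have h3 := div_nonpos_of_nonpos_of_nonneg (sub_nonpos.2 key) hl2.le
    linarith

lemma gamma_closed [DecidableEq A] : IsClosed (Gamma A) := by
  have : Gamma A = {h | h ∅ = 0} ∩ ((⋂ U : Finset A, ⋂ V : Finset A,
      {h : Finset A → ℝ | U ⊆ V → h U ≤ h V}) ∩ (⋂ U : Finset A, ⋂ V : Finset A,
      {h : Finset A → ℝ | h (U ∪ V) + h (U ∩ V) ≤ h U + h V})) := by
    ext h
    simp [Gamma, IsPolymatroid]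
  rw [this]
  refine (isClosed_eq (continuous_apply _) continuous_const).inter (IsClosed.inter ?_ ?_)
  · refine isClosed_iInter fun U => isClosed_iInter fun V => ?_
    by_cases h : U ⊆ V
    · simpa [h] using isClosed_le (continuous_apply U) (continuous_apply V)
    · simp [h]
  · refine isClosed_iInter fun U => isClosed_iInter fun V => ?_
    exact isClosed_le (by fun_prop) (by fun_prop)

lemma step_entropic [Fintype A] [DecidableEq A] (W : Finset A) : stepFn W ∈ EntropicSet A := by
  classical
  let t0 : A → Bool := fun _ => false
  let t1 : A → Bool := fun x => decide (x ∈ W)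
  let P : (A → Bool) → ℝ := fun t => (if t = t0 then 1 / 2 else 0) + (if t = t1 then 1 / 2 else 0)
  have hsum : ∀ f : (A → Bool) → ℝ, ∑ t, P t * f t = 1 / 2 * f t0 + 1 / 2 * f t1 := by
    intro f
    simp [P, add_mul, Finset.sum_add_distrib]
  have hq : ∀ U t, qq P U t = 1 / 2 * (if (∀ x ∈ U, t0 x = t x) then 1 else 0)
      + 1 / 2 * (if (∀ x ∈ U, t1 x = t x) then 1 else 0) := by
    intro U t
    rw [← hsum (fun t' => if (∀ x ∈ U, t' x = t x) then 1 else 0)]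
    unfold qq
    refine Finset.sum_congr rfl fun t' _ => ?_
    simp
  refine ⟨Bool, inferInstance, inferInstance, P, fun t => ?_, ?_, fun U => ?_⟩
  · simp only [P]
    split_ifs <;> norm_num
  · have := hsum (fun _ => 1)
    simp only [mul_one] at this
    rw [this]; norm_num
  · rw [entropy_eq, hsum, hq, hq]
    unfold stepFn
    by_cases h : (U ∩ W).Nonempty
    · rw [if_pos h]
      obtain ⟨y, hy⟩ := h
      have hy' := Finset.mem_inter.1 hy
      have n1 : ¬ ∀ x ∈ U, t0 x = t1 x := fun H => by
        have := H y hy'.1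
        simp [t0, t1, hy'.2] at this
      have n2 : ¬ ∀ x ∈ U, t1 x = t0 x := fun H => n1 fun x hx => (H x hx).symm
      rw [if_neg n1, if_neg n2]
      have : Real.logb 2 (1 / 2) = -1 := by
        rw [one_div, Real.logb_inv, Real.logb_self_eq_one (by norm_num)]
      simp only [implies_true, if_true, mul_one, mul_zero, add_zero, zero_add, this]
      norm_num
    · rw [if_neg h]
      have n1 : ∀ x ∈ U, t0 x = t1 x := fun x hx => by
        have : x ∉ W := fun hW => h ⟨x, Finset.mem_inter.2 ⟨hx, hW⟩⟩
        simp [t0, t1, this]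
      have n2 : ∀ x ∈ U, t1 x = t0 x := fun x hx => (n1 x hx).symm
      rw [if_pos n1, if_pos n2]
      norm_num

lemma statVal_sum [Fintype A] [DecidableEq A] (α : Finset A → ℝ) (U V : Finset A) (p : ℝ≥0∞) :
    statVal (∑ W : Finset A, α W • stepFn W) U V p
      = ∑ W : Finset A, α W * statVal (stepFn W) U V p := by
  unfold statVal
  simp only [Finset.sum_apply, Pi.smul_apply, smul_eq_mul]
  rw [Finset.mul_sum, ← Finset.sum_sub_distrib, ← Finset.sum_add_distrib]
  exact Finset.sum_congr rfl fun W _ => by ring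

lemma normal_valid [Fintype A] [DecidableEq A] (s : ℕ) (U V : Fin s → Finset A)
    (p : Fin s → ℝ≥0∞) (w : Fin s → ℝ)
    (hE : ∀ h ∈ closure (EntropicSet A),
      ∑ i, w i * statVal h (U i) (V i) (p i) ≥ h Finset.univ) :
    ∀ h ∈ Normal A, ∑ i, w i * statVal h (U i) (V i) (p i) ≥ h Finset.univ := by
  rintro h ⟨α, hα, rfl⟩
  simp only [statVal_sum, Finset.sum_apply, Pi.smul_apply, smul_eq_mul, Finset.mul_sum]
  rw [Finset.sum_comm, ge_iff_le]
  refine Finset.sum_le_sum fun W _ => ?_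
  have := mul_le_mul_of_nonneg_left (hE _ (subset_closure (step_entropic W))) (hα W)
  rw [Finset.mul_sum] at this
  refine this.trans (le_of_eq (Finset.sum_congr rfl fun i _ => by ring))

end Aux

/-- If all abstract statistics are simple (`|U i| ≤ 1`), then the normal
bound, the almost-entropic bound, and the polymatroid bound coincide. -/
theorem simple_bounds_coincide {A : Type*} [Fintype A] [DecidableEq A]
    (s : ℕ) (U V : Fin s → Finset A) (p : Fin s → ℝ≥0∞) (hp : ∀ i, 0 < p i)
    (hsimple : ∀ i, (U i).card ≤ 1) (b : Fin s → ℝ) :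
    LogUBound (Normal A) s U V p b = LogUBound (closure (EntropicSet A)) s U V p b ∧
    LogUBound (closure (EntropicSet A)) s U V p b = LogUBound (Gamma A) s U V p b := by
  have hEG : closure (EntropicSet A) ⊆ Gamma A :=
    closure_minimal entropic_sub_gamma gamma_closed
  have key1 : ∀ w : Fin s → ℝ, (∀ i, 0 ≤ w i) →
      ((∀ h ∈ Normal A, ∑ i, w i * statVal h (U i) (V i) (p i) ≥ h Finset.univ) ↔
      (∀ h ∈ Gamma A, ∑ i, w i * statVal h (U i) (V i) (p i) ≥ h Finset.univ)) := fun w hw =>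
    ⟨gamma_valid s U V p hsimple w hw, fun H => normal_valid s U V p w fun h hh => H h (hEG hh)⟩
  have key2 : ∀ w : Fin s → ℝ, (∀ i, 0 ≤ w i) →
      ((∀ h ∈ closure (EntropicSet A),
        ∑ i, w i * statVal h (U i) (V i) (p i) ≥ h Finset.univ) ↔
      (∀ h ∈ Gamma A, ∑ i, w i * statVal h (U i) (V i) (p i) ≥ h Finset.univ)) := fun w hw =>
    ⟨fun H => gamma_valid s U V p hsimple w hw (normal_valid s U V p w H),
      fun H h hh => H h (hEG hh)⟩
  have e2 : LogUBound (closure (EntropicSet A)) s U V p b = LogUBound (Gamma A) s U V p b := by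
    unfold LogUBound
    congr 1
    ext r
    exact exists_congr fun w => and_congr_right fun hw => and_congr_left fun _ => key2 w hw
  have e1 : LogUBound (Normal A) s U V p b = LogUBound (Gamma A) s U V p b := by
    unfold LogUBound
    congr 1
    ext r
    exact exists_congr fun w => and_congr_right fun hw => and_congr_left fun _ => key1 w hw
  exact ⟨e1.trans e2.symm, e2⟩

end JoinBounds
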